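/- Let f and f′ be admissible 6-tuples such that f=h(f′) for some h∈H=⟨ψ₁,ψ₂,ψ₃⟩. Then there exist h′∈H′=⟨ψ₂,ψ₃⟩ and e∈{0,1,2} such that σ(f)=h′(σ(ψ₁^e(f′))); in particular σ(f) is H′-equivalent (and hence H-equivalent) to one of σ(f′), σ(ψ₁(f′)), σ(ψ₁²(f′)). -/

import Mathlib

/-!
Common setup: 6-tuples, the coloured graph Γ(f), conditions (I)–(VI),
the maps ψ₁, ψ₂, ψ₃, σ, equivalences, traps, canonical/minimal/root tuples.
-/

namespace GMN

/-- A 6-tuple `(h₀,h₁,h₂;q₀,q₁,q₂)` of integers. -/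
structure Tuple where
  h0 : ℤ
  h1 : ℤ
  h2 : ℤ
  q0 : ℤ
  q1 : ℤ
  q2 : ℤ

namespace Tuple

/-- The `h`-components indexed by `ℤ₃`. -/
def h (f : Tuple) : ZMod 3 → ℤ := fun i => if i = 0 then f.h0 else if i = 1 then f.h1 else f.h2

/-- The `q`-components indexed by `ℤ₃`. -/
def q (f : Tuple) : ZMod 3 → ℤ := fun i => if i = 0 then f.q0 else if i = 1 then f.q1 else f.q2

/-- `2lᵢ = h_{i-1} + hᵢ`. -/
def twol (f : Tuple) (i : ZMod 3) : ℤ := f.h (i - 1) + f.h i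

end Tuple

/-- Condition (I): all `hᵢ` positive. -/
def CondI (f : Tuple) : Prop := ∀ i, 0 < f.h i

/-- Condition (II): all `hᵢ` of the same parity. -/
def CondII (f : Tuple) : Prop := ∀ i j, f.h i % 2 = f.h j % 2

/-- Condition (III): `0 ≤ qᵢ < 2lᵢ`. -/
def CondIII (f : Tuple) : Prop := ∀ i, 0 ≤ f.q i ∧ f.q i < f.twol i

/-- Condition (IV): all `qᵢ` of the same parity. -/
def CondIV (f : Tuple) : Prop := ∀ i j, f.q i % 2 = f.q j % 2

/-- Conditions (I)–(IV) together. -/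
def CondsI_IV (f : Tuple) : Prop := CondI f ∧ CondII f ∧ CondIII f ∧ CondIV f

/-- Condition (V): `hᵢ + qᵢ` odd. -/
def CondV (f : Tuple) : Prop := ∀ i, (f.h i + f.q i) % 2 = 1

/-- The vertex set `V(f) = ⋃ᵢ {i} × ℤ_{2lᵢ}`, with second coordinates as least
nonnegative residues. -/
def Vtx (f : Tuple) : Set (ZMod 3 × ℤ) := {p | 0 ≤ p.2 ∧ p.2 < f.twol p.1}

/-- `ι₀(i,j) = (i, j + (−1)^j)`, second coordinate mod `2lᵢ`. -/
def iota0 (f : Tuple) (p : ZMod 3 × ℤ) : ZMod 3 × ℤ :=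
  (p.1, (if p.2 % 2 = 0 then p.2 + 1 else p.2 - 1) % f.twol p.1)

/-- `ι₁(i,j) = (i, j − (−1)^j)`, second coordinate mod `2lᵢ`. -/
def iota1 (f : Tuple) (p : ZMod 3 × ℤ) : ZMod 3 × ℤ :=
  (p.1, (if p.2 % 2 = 0 then p.2 - 1 else p.2 + 1) % f.twol p.1)

/-- `ι₂(i,j) = (i+1, −j−1)` if `0 ≤ j ≤ hᵢ−1`, and `(i−1, 2lᵢ−j−1)` if `hᵢ ≤ j ≤ 2lᵢ−1`. -/
def iota2 (f : Tuple) (p : ZMod 3 × ℤ) : ZMod 3 × ℤ :=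
  if p.2 < f.h p.1 then (p.1 + 1, (-p.2 - 1) % f.twol (p.1 + 1))
  else (p.1 - 1, (f.twol p.1 - p.2 - 1) % f.twol (p.1 - 1))

/-- `ρ(i,j) = (i, j + qᵢ)`. -/
def rho (f : Tuple) (p : ZMod 3 × ℤ) : ZMod 3 × ℤ :=
  (p.1, (p.2 + f.q p.1) % f.twol p.1)

/-- `ρ⁻¹(i,j) = (i, j − qᵢ)`. -/
def rhoInv (f : Tuple) (p : ZMod 3 × ℤ) : ZMod 3 × ℤ :=
  (p.1, (p.2 - f.q p.1) % f.twol p.1)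

/-- `ι₃ = ρ ∘ ι₂ ∘ ρ⁻¹`. -/
def iota3 (f : Tuple) : ZMod 3 × ℤ → ZMod 3 × ℤ :=
  rho f ∘ iota2 f ∘ rhoInv f

/-- The four involutions of `Γ(f)`, indexed by the colour `c ∈ {0,1,2,3}`. -/
def iota (f : Tuple) : Fin 4 → ZMod 3 × ℤ → ZMod 3 × ℤ
  | 0 => iota0 f
  | 1 => iota1 f
  | 2 => iota2 f
  | 3 => iota3 f

/-- One step along an edge of `Γ(f)` whose colour lies in `S`, within `V(f)`. -/
def Step (f : Tuple) (S : Set (Fin 4)) (a b : ZMod 3 × ℤ) : Prop :=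
  a ∈ Vtx f ∧ b ∈ Vtx f ∧ ∃ c ∈ S, b = iota f c a

/-- The orbit relation on `V(f)` of the subgroup generated by the involutions with
colours in `S` (the `S`-residue relation). -/
def OrbRel (f : Tuple) (S : Set (Fin 4)) : ZMod 3 × ℤ → ZMod 3 × ℤ → Prop :=
  Relation.EqvGen (Step f S)

/-- The subgroup generated by the colours in `S` has exactly three orbits on `V(f)`. -/
def ThreeOrbits (f : Tuple) (S : Set (Fin 4)) : Prop :=
  ∃ a b c, a ∈ Vtx f ∧ b ∈ Vtx f ∧ c ∈ Vtx f ∧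
    ¬ OrbRel f S a b ∧ ¬ OrbRel f S a c ∧ ¬ OrbRel f S b c ∧
    ∀ v ∈ Vtx f, OrbRel f S a v ∨ OrbRel f S b v ∨ OrbRel f S c v

/-- Admissibility: conditions (I)–(IV), (V), and (VI) (three `{2,3}`-residues). -/
def Admissible (f : Tuple) : Prop :=
  CondsI_IV f ∧ CondV f ∧ ThreeOrbits f {2, 3}

/-- `ψ₁(h₀,h₁,h₂;q₀,q₁,q₂) = (h₁,h₂,h₀;q₁,q₂,q₀)`. -/
def psi1 (f : Tuple) : Tuple := ⟨f.h1, f.h2, f.h0, f.q1, f.q2, f.q0⟩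

/-- `ψ₂(h₀,h₁,h₂;q₀,q₁,q₂) = (h₂,h₁,h₀;q₀,q₂,q₁)`. -/
def psi2 (f : Tuple) : Tuple := ⟨f.h2, f.h1, f.h0, f.q0, f.q2, f.q1⟩

/-- `ψ₃(h₀,h₁,h₂;q₀,q₁,q₂) = (h₀,h₁,h₂;−q₀,−q₁,−q₂)`, the `q`-entries reduced to their
least nonnegative residues mod the respective `2lᵢ`. -/
def psi3 (f : Tuple) : Tuple :=
  ⟨f.h0, f.h1, f.h2,
    (-f.q0) % (f.h2 + f.h0), (-f.q1) % (f.h0 + f.h1), (-f.q2) % (f.h1 + f.h2)⟩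

/-- The 2-symmetric transformation `σ`, with the `q′`-entries reduced to their least
nonnegative residues mod the respective `2lᵢ′ = h′_{i−1} + h′ᵢ`. -/
def sigma (f : Tuple) : Tuple :=
  if f.q0 = 0 then f
  else if f.q0 < f.h0 ∧ f.q0 < f.h2 then
    ⟨f.h0 + f.h1 - f.q0, f.q0, f.h2 + f.h1 - f.q0,
      (f.h0 + f.h1 + f.h2 - 2 * f.q0) % ((f.h2 + f.h1 - f.q0) + (f.h0 + f.h1 - f.q0)),
      (f.q0 + f.q1 + f.h1) % ((f.h0 + f.h1 - f.q0) + f.q0),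
      (f.q0 + f.q2 + f.h1) % (f.q0 + (f.h2 + f.h1 - f.q0))⟩
  else if f.h0 < f.q0 ∧ f.h2 < f.q0 then
    ⟨f.q0 + f.h1 - f.h2, f.h0 + f.h2 - f.q0, f.q0 + f.h1 - f.h0,
      f.h1 % ((f.q0 + f.h1 - f.h0) + (f.q0 + f.h1 - f.h2)),
      (f.q0 + f.q1 - f.h2) % ((f.q0 + f.h1 - f.h2) + (f.h0 + f.h2 - f.q0)),
      (f.q0 + f.q2 - f.h0) % ((f.h0 + f.h2 - f.q0) + (f.q0 + f.h1 - f.h0))⟩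
  else if f.q0 < f.h2 then
    ⟨f.h1, f.h0, f.h1 + f.h2 - f.h0,
      (f.h1 + f.h2 - f.q0) % ((f.h1 + f.h2 - f.h0) + f.h1),
      f.q1 % (f.h1 + f.h0),
      (2 * f.q0 + f.q2 + f.h1 - f.h0) % (f.h0 + (f.h1 + f.h2 - f.h0))⟩
  else
    ⟨f.h1 + f.h0 - f.h2, f.h2, f.h1,
      (f.h1 + f.h0 - f.q0) % (f.h1 + (f.h1 + f.h0 - f.h2)),
      (2 * f.q0 + f.q1 + f.h1 - f.h2) % ((f.h1 + f.h0 - f.h2) + f.h2),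
      f.q2 % (f.h2 + f.h1)⟩

/-- The complexity `ν(f) = h₀ + h₁ + h₂`. -/
def nu (f : Tuple) : ℤ := f.h0 + f.h1 + f.h2

/-- `δ(f) = ν(σ(f)) − ν(f)`. -/
def delta (f : Tuple) : ℤ := nu (sigma f) - nu f

/-- One step of the action of a generator of `H` on admissible 6-tuples. -/
def HStep (a b : Tuple) : Prop :=
  Admissible a ∧ Admissible b ∧ (b = psi1 a ∨ b = psi2 a ∨ b = psi3 a)

/-- `H`-equivalence: the orbit relation of `H = ⟨ψ₁,ψ₂,ψ₃⟩` on `ℱ`. -/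
def HEquiv : Tuple → Tuple → Prop := Relation.EqvGen HStep

/-- One step of the action of a generator of `H′` on admissible 6-tuples. -/
def H'Step (a b : Tuple) : Prop :=
  Admissible a ∧ Admissible b ∧ (b = psi2 a ∨ b = psi3 a)

/-- `H′`-equivalence: the orbit relation of `H′ = ⟨ψ₂,ψ₃⟩` on `ℱ`. -/
def H'Equiv : Tuple → Tuple → Prop := Relation.EqvGen H'Step

/-- One step of the action of a generator of `G` on admissible 6-tuples. -/
def GStep (a b : Tuple) : Prop :=
  Admissible a ∧ Admissible b ∧ (b = psi1 a ∨ b = psi2 a ∨ b = psi3 a ∨ b = sigma a)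

/-- `G`-equivalence: the orbit relation of `G = ⟨ψ₁,ψ₂,ψ₃,σ⟩` on `ℱ`. -/
def GEquiv : Tuple → Tuple → Prop := Relation.EqvGen GStep

/-- Membership in the set `{0, r+1, r+2, …, s−1}`. -/
def inT (r s x : ℤ) : Prop := x = 0 ∨ (r < x ∧ x < s)

/-- A trap of type `(r,s)`: `H`-equivalent to an admissible `(r,r,s;q₀,0,q₂)` with
`q₀+k(q₀+q₂), q₂+k(q₀+q₂) ∈ {0,r+1,…,s−1} (mod r+s)` for all `k ≥ 0`. -/
def IsTrapOfType (r s : ℤ) (f : Tuple) : Prop :=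
  ∃ g : Tuple, Admissible g ∧ HEquiv f g ∧
    g.h0 = r ∧ g.h1 = r ∧ g.h2 = s ∧ g.q1 = 0 ∧
    ∀ k : ℕ, inT r s ((g.q0 + (k : ℤ) * (g.q0 + g.q2)) % (r + s)) ∧
             inT r s ((g.q2 + (k : ℤ) * (g.q0 + g.q2)) % (r + s))

/-- A trap: a trap of some type `(r,s)` with `0 < r ≤ s`. -/
def IsTrap (f : Tuple) : Prop := ∃ r s : ℤ, 0 < r ∧ r ≤ s ∧ IsTrapOfType r s f

/-- The canonical representative conditions (a)–(i) (together with admissibility). -/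
def Canonical (f : Tuple) : Prop :=
  Admissible f ∧
  (f.h0 ≤ f.h1 ∧ f.h1 ≤ f.h2) ∧
  (2 * f.q0 ≤ f.h2 + f.h0) ∧
  ((f.q0 = 0 ∨ 2 * f.q0 = f.h2 + f.h0) → 2 * f.q1 ≤ f.h0 + f.h1) ∧
  ((f.q0 = 0 ∨ 2 * f.q0 = f.h2 + f.h0) → (f.q1 = 0 ∨ 2 * f.q1 = f.h0 + f.h1) →
    2 * f.q2 ≤ f.h1 + f.h2) ∧
  (f.h0 = f.h1 → f.q0 ≤ f.q2 ∧ f.q2 ≤ (-f.q0) % (f.h2 + f.h0)) ∧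
  (f.h0 = f.h1 → (f.q2 = f.q0 ∨ f.q2 = (-f.q0) % (f.h2 + f.h0)) → f.q1 ≤ f.h1) ∧
  (f.h1 = f.h2 → f.q0 ≤ f.q1 ∧ f.q1 ≤ (-f.q0) % (f.h2 + f.h0)) ∧
  (f.h1 = f.h2 → (f.q1 = f.q0 ∨ f.q1 = (-f.q0) % (f.h2 + f.h0)) → f.q2 ≤ f.h2) ∧
  (f.h0 = f.h1 ∧ f.h1 = f.h2 → f.q1 ≤ f.q2)

/-- A canonical 6-tuple is minimal if its complexity is minimal in its `G`-orbit. -/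
def Minimal (f : Tuple) : Prop :=
  Canonical f ∧ ∀ g, GEquiv f g → nu f ≤ nu g

/-- A canonical 6-tuple is a root if every `G`-equivalent but not `H`-equivalent
6-tuple has strictly larger complexity. -/
def Root (f : Tuple) : Prop :=
  Canonical f ∧ ∀ g, GEquiv f g → ¬ HEquiv f g → nu f < nu g

/-- A colour-preserving isomorphism between `Γ(f)` and `Γ(f′)`. -/
def CPIso (f f' : Tuple) : Prop :=
  ∃ φ : ZMod 3 × ℤ → ZMod 3 × ℤ, Set.BijOn φ (Vtx f) (Vtx f') ∧
    ∀ c : Fin 4, ∀ v ∈ Vtx f, φ (iota f c v) = iota f' c (φ v)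

/-- The set of admissible 6-tuples, as a type. -/
abbrev AdmTuple := {f : Tuple // Admissible f}

/-! ### Colourings constant on `{2,3}`-residues -/

/-- Three functions on `ℤ`, one for each circle of the graph of `(h₀,h₁,h₂;q₀,q₁,q₂)`, which are
periodic with the lengths of the circles and take equal values at the ends of each edge of colour
`2` or `3`. The twists `qᵢ` need not be reduced. -/
structure IsColoring {X : Type} (h0 h1 h2 q0 q1 q2 : ℤ) (b0 b1 b2 : ℤ → X) : Prop where
  per0 : ∀ j, b0 (j + (h2 + h0)) = b0 j
  per1 : ∀ j, b1 (j + (h0 + h1)) = b1 j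
  per2 : ∀ j, b2 (j + (h1 + h2)) = b2 j
  e0 : ∀ j, 0 ≤ j → j < h0 → b0 j = b1 (-j - 1)
  e1 : ∀ j, 0 ≤ j → j < h1 → b1 j = b2 (-j - 1)
  e2 : ∀ j, 0 ≤ j → j < h2 → b2 j = b0 (-j - 1)
  t0 : ∀ j, 0 ≤ j → j < h0 → b0 (j + q0) = b1 (-j - 1 + q1)
  t1 : ∀ j, 0 ≤ j → j < h1 → b1 (j + q1) = b2 (-j - 1 + q2)
  t2 : ∀ j, 0 ≤ j → j < h2 → b2 (j + q2) = b0 (-j - 1 + q0)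

theorem periodic_congr {X : Type} {b : ℤ → X} {n : ℤ} (hb : ∀ j, b (j + n) = b j)
    {x y : ℤ} (k : ℤ) (h : x = y + k * n) : b x = b y := by
  have : Function.Periodic b n := hb
  rw [h]
  exact this.int_mul k y

theorem periodic_emod {X : Type} {b : ℤ → X} {n : ℤ} (hb : ∀ j, b (j + n) = b j) (x : ℤ) :
    b (x % n) = b x :=
  periodic_congr hb (-(x / n)) (by linarith [Int.emod_add_mul_ediv x n])

namespace IsColoring

variable {X : Type} {h0 h1 h2 q0 q1 q2 : ℤ} {b0 b1 b2 : ℤ → X}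

theorem E0 (hb : IsColoring h0 h1 h2 q0 q1 q2 b0 b1 b2) (x k m : ℤ) {u v : ℤ}
    (hx : 0 ≤ x ∧ x < h0) (hu : u = x + k * (h2 + h0)) (hv : v = -x - 1 + m * (h0 + h1)) :
    b0 u = b1 v := by
  rw [periodic_congr hb.per0 k hu, periodic_congr hb.per1 m hv, hb.e0 x hx.1 hx.2]

theorem E1 (hb : IsColoring h0 h1 h2 q0 q1 q2 b0 b1 b2) (x k m : ℤ) {u v : ℤ}
    (hx : 0 ≤ x ∧ x < h1) (hu : u = x + k * (h0 + h1)) (hv : v = -x - 1 + m * (h1 + h2)) :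
    b1 u = b2 v := by
  rw [periodic_congr hb.per1 k hu, periodic_congr hb.per2 m hv, hb.e1 x hx.1 hx.2]

theorem E2 (hb : IsColoring h0 h1 h2 q0 q1 q2 b0 b1 b2) (x k m : ℤ) {u v : ℤ}
    (hx : 0 ≤ x ∧ x < h2) (hu : u = x + k * (h1 + h2)) (hv : v = -x - 1 + m * (h2 + h0)) :
    b2 u = b0 v := by
  rw [periodic_congr hb.per2 k hu, periodic_congr hb.per0 m hv, hb.e2 x hx.1 hx.2]

theorem T0 (hb : IsColoring h0 h1 h2 q0 q1 q2 b0 b1 b2) (x k m : ℤ) {u v : ℤ}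
    (hx : 0 ≤ x ∧ x < h0) (hu : u = x + q0 + k * (h2 + h0))
    (hv : v = -x - 1 + q1 + m * (h0 + h1)) : b0 u = b1 v := by
  rw [periodic_congr hb.per0 k hu, periodic_congr hb.per1 m hv, hb.t0 x hx.1 hx.2]

theorem T1 (hb : IsColoring h0 h1 h2 q0 q1 q2 b0 b1 b2) (x k m : ℤ) {u v : ℤ}
    (hx : 0 ≤ x ∧ x < h1) (hu : u = x + q1 + k * (h0 + h1))
    (hv : v = -x - 1 + q2 + m * (h1 + h2)) : b1 u = b2 v := by
  rw [periodic_congr hb.per1 k hu, periodic_congr hb.per2 m hv, hb.t1 x hx.1 hx.2]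

theorem T2 (hb : IsColoring h0 h1 h2 q0 q1 q2 b0 b1 b2) (x k m : ℤ) {u v : ℤ}
    (hx : 0 ≤ x ∧ x < h2) (hu : u = x + q2 + k * (h1 + h2))
    (hv : v = -x - 1 + q0 + m * (h2 + h0)) : b2 u = b0 v := by
  rw [periodic_congr hb.per2 k hu, periodic_congr hb.per0 m hv, hb.t2 x hx.1 hx.2]

/-- The colours on circle `0` already occur on the other two circles. -/
theorem exists_eq_zero (hb : IsColoring h0 h1 h2 q0 q1 q2 b0 b1 b2) (hn : 0 < h2 + h0) (j : ℤ) :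
    (∃ y, b1 y = b0 j) ∨ ∃ y, b2 y = b0 j := by
  have hlt := Int.emod_lt_of_pos j hn
  have hnn := Int.emod_nonneg j hn.ne'
  rw [← periodic_emod hb.per0]
  by_cases hj : j % (h2 + h0) < h0
  · exact .inl ⟨_, (hb.e0 _ hnn hj).symm⟩
  · exact .inr ⟨_, hb.E2 (h2 + h0 - 1 - j % (h2 + h0)) 0 1 (by omega) rfl (by ring)⟩

/-- The twists only matter modulo the lengths of the circles. -/
theorem congr_twists (hb : IsColoring h0 h1 h2 q0 q1 q2 b0 b1 b2) {q0' q1' q2' : ℤ}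
    (k0 k1 k2 : ℤ) (H0 : q0' = q0 + k0 * (h2 + h0)) (H1 : q1' = q1 + k1 * (h0 + h1))
    (H2 : q2' = q2 + k2 * (h1 + h2)) : IsColoring h0 h1 h2 q0' q1' q2' b0 b1 b2 :=
  { hb with
    t0 := fun j h h' ↦ hb.T0 j k0 k1 ⟨h, h'⟩ (by rw [H0]; ring) (by rw [H1]; ring)
    t1 := fun j h h' ↦ hb.T1 j k1 k2 ⟨h, h'⟩ (by rw [H1]; ring) (by rw [H2]; ring)
    t2 := fun j h h' ↦ hb.T2 j k2 k0 ⟨h, h'⟩ (by rw [H2]; ring) (by rw [H0]; ring) }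

theorem of_emod (hb : IsColoring h0 h1 h2 (q0 % (h2 + h0)) (q1 % (h0 + h1)) (q2 % (h1 + h2))
    b0 b1 b2) : IsColoring h0 h1 h2 q0 q1 q2 b0 b1 b2 :=
  hb.congr_twists (q0 / (h2 + h0)) (q1 / (h0 + h1)) (q2 / (h1 + h2))
    (by linarith [Int.emod_add_mul_ediv q0 (h2 + h0)])
    (by linarith [Int.emod_add_mul_ediv q1 (h0 + h1)])
    (by linarith [Int.emod_add_mul_ediv q2 (h1 + h2)])

/-- A colouring can be built from its values on circles `1` and `2`: those on circle `0` are forced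
by the edges of colour `2`, and the edges of colour `3` give the compatibility condition. -/
theorem exists_of_two (hh0 : 0 < h0) (hh2 : 0 < h2) (hq : 0 ≤ q0 ∧ q0 < h2 + h0) {a1 a2 : ℤ → X}
    (per1 : ∀ j, a1 (j + (h0 + h1)) = a1 j) (per2 : ∀ j, a2 (j + (h1 + h2)) = a2 j)
    (e1 : ∀ j, 0 ≤ j → j < h1 → a1 j = a2 (-j - 1))
    (t1 : ∀ j, 0 ≤ j → j < h1 → a1 (j + q1) = a2 (-j - 1 + q2))
    (c0 : ∀ j k, -h2 ≤ j → j < h0 → -h2 ≤ k → k < h0 → (k = j + q0 ∨ k = j + q0 - (h0 + h2)) →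
      (if 0 ≤ k then a1 (-k - 1) else a2 (-k - 1)) =
        (if 0 ≤ j then a1 (-j - 1 + q1) else a2 (-j - 1 + q2))) :
    ∃ a0, IsColoring h0 h1 h2 q0 q1 q2 a0 a1 a2 := by
  let F : ℤ → X := fun r ↦ if 0 ≤ r then a1 (-r - 1) else a2 (-r - 1)
  let a0 : ℤ → X := fun j ↦ F ((j + h2) % (h2 + h0) - h2)
  have ha0 : ∀ j, -h2 ≤ j → j < h0 → a0 j = F j := fun j h h' ↦ by
    simp only [a0]
    rw [Int.emod_eq_of_lt (by omega) (by omega)]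
    congr 1
    ring
  have hper : ∀ j, a0 (j + (h2 + h0)) = a0 j := fun j ↦ by
    simp only [a0]
    rw [show j + (h2 + h0) + h2 = j + h2 + (h2 + h0) by ring, Int.add_emod_right]
  have hF : ∀ j, -h2 ≤ j → j < h0 →
      a0 (j + q0) = if 0 ≤ j then a1 (-j - 1 + q1) else a2 (-j - 1 + q2) := fun j h h' ↦ by
    by_cases hk : j + q0 < h0
    · rw [ha0 _ (by omega) hk]
      exact c0 j _ h h' (by omega) hk (.inl rfl)
    · rw [periodic_congr hper (y := j + q0 - (h0 + h2)) 1 (by ring), ha0 _ (by omega) (by omega)]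
      exact c0 j _ h h' (by omega) (by omega) (.inr rfl)
  refine ⟨a0, hper, per1, per2, fun j h h' ↦ ?_, e1, fun j h h' ↦ ?_, fun j h h' ↦ ?_, t1,
    fun j h h' ↦ ?_⟩
  · rw [ha0 j (by omega) h']
    exact if_pos h
  · rw [ha0 _ (by omega) (by omega)]
    simp only [F]
    rw [if_neg (by omega)]
    congr 1
    ring
  · rw [hF j (by omega) h', if_pos h]
  · rw [hF _ (by omega) (by omega), if_neg (by omega)]
    congr 1
    ring

/-- Pulling back colourings along `σ` when `q₀ < h₀, h₂`. -/
theorem sigma_small (hh1 : 0 < h1) (hq : 0 < q0) (hq0 : q0 < h0) (hq2 : q0 < h2)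
    (hb : IsColoring (h0 + h1 - q0) q0 (h2 + h1 - q0) (h0 + h1 + h2 - 2 * q0) (q0 + q1 + h1)
      (q0 + q2 + h1) b0 b1 b2) :
    ∃ a0, IsColoring h0 h1 h2 q0 q1 q2 a0 (fun j ↦ b1 (j + q0)) (fun j ↦ b2 (q2 - 1 - j)) := by
  refine exists_of_two (by omega) (by omega) (by omega)
    (fun j ↦ periodic_congr hb.per1 1 (by ring)) (fun j ↦ periodic_congr hb.per2 (-1) (by ring))
    (fun j hj hj' ↦ ?_) (fun j hj hj' ↦ ?_) (fun j k hj hj' hk hk' hjk ↦ ?_)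
  · exact (hb.E0 (h0 + h1 - 1 - q0 - j) 0 1 (by omega) rfl (by ring)).symm.trans
      (hb.T2 (j + h2 - q0) (-1) 0 (by omega) (by ring) (by ring)).symm
  · exact (hb.T0 (h1 - 1 - j) 0 0 (by omega) rfl (by ring)).symm.trans
      (hb.E2 j 0 1 (by omega) (by ring) (by ring)).symm
  · split_ifs with h h'
    · obtain rfl : k = j + q0 := by omega
      exact (hb.E0 j 0 0 (by omega) rfl (by ring)).symm.trans
        (hb.T0 (j + h1) (-1) 0 (by omega) (by ring) (by ring))
    · obtain rfl : k = j + q0 := by omega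
      exact hb.E1 (-j - 1) 0 0 (by omega) (by ring) (by ring)
    · obtain rfl : k = j + q0 - (h0 + h2) := by omega
      exact (hb.T1 (-j - 1 + h0) (-1) (-1) (by omega) (by ring) (by ring)).symm
    · obtain rfl : k = j + q0 := by omega
      exact (hb.T2 (j + h2) (-1) 0 (by omega) (by ring) rfl).trans
        (hb.E2 (j + h1 + h2) (-1) 1 (by omega) (by ring) (by ring)).symm

/-- Pulling back colourings along `σ` when `h₀, h₂ < q₀`. -/
theorem sigma_large (hh1 : 0 < h1) (hh0 : 0 < h0) (hh2 : 0 < h2) (hq0 : h0 < q0) (hq2 : h2 < q0)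
    (hq : q0 < h2 + h0)
    (hb : IsColoring (q0 + h1 - h2) (h0 + h2 - q0) (q0 + h1 - h0) h1 (q0 + q1 - h2)
      (q0 + q2 - h0) b0 b1 b2) :
    ∃ a0, IsColoring h0 h1 h2 q0 q1 q2 a0 (fun j ↦ b1 (j - h1))
      (fun j ↦ b2 (q0 + q2 - h0 - 1 - j)) := by
  refine exists_of_two (by omega) (by omega) (by omega)
    (fun j ↦ periodic_congr hb.per1 1 (by ring)) (fun j ↦ periodic_congr hb.per2 (-1) (by ring))
    (fun j hj hj' ↦ ?_) (fun j hj hj' ↦ ?_) (fun j k hj hj' hk hk' hjk ↦ ?_)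
  · exact (hb.E0 (h1 - 1 - j) 0 0 (by omega) rfl (by ring)).symm.trans
      (hb.T2 j 0 0 (by omega) (by ring) (by ring)).symm
  · exact (hb.T0 (h1 + q0 - h2 - 1 - j) 0 0 (by omega) rfl (by ring)).symm.trans
      (hb.E2 (q0 - h0 + j) 0 1 (by omega) (by ring) (by ring)).symm
  · split_ifs with h h'
    · obtain rfl : k = j + q0 - (h0 + h2) := by omega
      exact (hb.E0 (j + q0 - (h0 + h2) + h1) 0 0 (by omega) rfl (by ring)).symm.trans
        (hb.T0 (j + q0 - (h0 + h2)) 0 (-1) (by omega) (by ring) (by ring))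
    · obtain rfl : k = j + q0 := by omega
      exact hb.E1 (h0 - 1 - (j + q0)) (-1) 0 (by omega) (by ring) (by ring)
    · obtain rfl : k = j + q0 - (h0 + h2) := by omega
      exact (hb.T1 (-(j + q0 - (h0 + h2)) - 1) (-1) 0 (by omega) (by ring) (by ring)).symm
    · obtain rfl : k = j + q0 - (h0 + h2) := by omega
      exact (hb.T2 (j + q0 - h0 + h1) (-1) 0 (by omega) (by ring) rfl).trans
        (hb.E2 (j + q0 - h0) 0 0 (by omega) (by ring) (by ring)).symm

/-- Pulling back colourings along `σ` when `h₀ < q₀ < h₂`. -/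
theorem sigma_between (hh1 : 0 < h1) (hh0 : 0 < h0) (hq0 : h0 < q0) (hq2 : q0 < h2)
    (hb : IsColoring h1 h0 (h1 + h2 - h0) (h1 + h2 - q0) q1 (2 * q0 + q2 + h1 - h0) b0 b1 b2) :
    ∃ a0, IsColoring h0 h1 h2 q0 q1 q2 a0 (fun j ↦ b1 (j + h0))
      (fun j ↦ b2 (q0 + q2 - h0 - 1 - j)) := by
  refine exists_of_two (by omega) (by omega) (by omega)
    (fun j ↦ periodic_congr hb.per1 1 (by ring)) (fun j ↦ periodic_congr hb.per2 (-1) (by ring))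
    (fun j hj hj' ↦ ?_) (fun j hj hj' ↦ ?_) (fun j k hj hj' hk hk' hjk ↦ ?_)
  · exact (hb.E0 (h1 - 1 - j) 0 1 (by omega) rfl (by ring)).symm.trans
      (hb.T2 (j - q0 + h2) (-1) 0 (by omega) (by ring) (by ring)).symm
  · exact (hb.T0 (h1 - 1 - j) 0 1 (by omega) rfl (by ring)).symm.trans
      (hb.E2 (q0 - h0 + j) 0 1 (by omega) (by ring) (by ring)).symm
  · split_ifs with h h'
    · omega
    · obtain rfl : k = j + q0 := by omega
      exact hb.E1 (h0 - 1 - (j + q0)) 0 0 (by omega) (by ring) (by ring)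
    · obtain rfl : k = j + q0 - (h0 + h2) := by omega
      exact (hb.T1 (h0 - 1 - j) 0 (-1) (by omega) (by ring) (by ring)).symm
    · rcases hjk with rfl | rfl
      · exact (hb.T2 (j + h2) (-1) 0 (by omega) (by ring) rfl).trans
          (hb.E2 (j + q0 - h0 + h1 + h2) (-1) 1 (by omega) (by ring) (by ring)).symm
      · exact (hb.T2 (j - h0 + h1 + h2) (-2) 0 (by omega) (by ring) rfl).trans
          (hb.E2 (j + q0 - h0) 0 0 (by omega) (by ring) (by ring)).symm

end IsColoring

/-! ### Colourings of tuples and numbers of orbits -/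

/-- A colouring of the vertices of the graph of `f`, extended periodically, which is constant on
`{2,3}`-residues. -/
def Colors {X : Type} (f : Tuple) (c : ZMod 3 → ℤ → X) : Prop :=
  IsColoring f.h0 f.h1 f.h2 f.q0 f.q1 f.q2 (c 0) (c 1) (c 2)

theorem forall_zmod_three {P : ZMod 3 → Prop} : (∀ i, P i) ↔ P 0 ∧ P 1 ∧ P 2 := by
  refine ⟨fun h ↦ ⟨h 0, h 1, h 2⟩, fun ⟨h0, h1, h2⟩ i ↦ ?_⟩
  fin_cases i
  exacts [h0, h1, h2]

namespace Colors

variable {X : Type} {f : Tuple} {c : ZMod 3 → ℤ → X}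

theorem periodic (hc : Colors f c) : ∀ i j, c i (j + f.twol i) = c i j :=
  forall_zmod_three.2 ⟨hc.per0, hc.per1, hc.per2⟩

theorem edge_two (hc : Colors f c) : ∀ i j, 0 ≤ j → j < f.h i → c i j = c (i + 1) (-j - 1) :=
  forall_zmod_three.2 ⟨hc.e0, hc.e1, hc.e2⟩

theorem edge_three (hc : Colors f c) : ∀ i j, 0 ≤ j → j < f.h i →
    c i (j + f.q i) = c (i + 1) (-j - 1 + f.q (i + 1)) :=
  forall_zmod_three.2 ⟨hc.t0, hc.t1, hc.t2⟩

theorem of_edges (hp : ∀ i j, c i (j + f.twol i) = c i j)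
    (h2 : ∀ i j, 0 ≤ j → j < f.h i → c i j = c (i + 1) (-j - 1))
    (h3 : ∀ i j, 0 ≤ j → j < f.h i → c i (j + f.q i) = c (i + 1) (-j - 1 + f.q (i + 1))) :
    Colors f c :=
  ⟨hp 0, hp 1, hp 2, h2 0, h2 1, h2 2, h3 0, h3 1, h3 2⟩

end Colors

theorem color_iota2 {X : Type} {f : Tuple} {c : ZMod 3 → ℤ → X}
    (hp : ∀ i j, c i (j + f.twol i) = c i j)
    (he : ∀ i j, 0 ≤ j → j < f.h i → c i j = c (i + 1) (-j - 1))
    {p : ZMod 3 × ℤ} (hv : p ∈ Vtx f) : c (iota2 f p).1 (iota2 f p).2 = c p.1 p.2 := by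
  obtain ⟨h0, h1⟩ := hv
  unfold iota2
  split_ifs with h
  · simp only
    rw [periodic_emod (hp _), he _ _ h0 h]
  · have ht : f.twol p.1 = f.h (p.1 - 1) + f.h p.1 := rfl
    simp only
    rw [periodic_emod (hp _), he _ _ (by omega) (by omega), sub_add_cancel]
    exact periodic_congr (hp _) (-1) (by ring)

theorem twol_pos {f : Tuple} (h : CondI f) (i : ZMod 3) : 0 < f.twol i :=
  add_pos (h _) (h _)

theorem Colors.color_iota {X : Type} {f : Tuple} {c : ZMod 3 → ℤ → X} (hI : CondI f)
    (hc : Colors f c) {p p' : ZMod 3 × ℤ} (h : Step f {2, 3} p p') :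
    c p.1 p.2 = c p'.1 p'.2 := by
  obtain ⟨hp, -, k, hk, rfl⟩ := h
  rcases hk with rfl | rfl
  · exact (color_iota2 hc.periodic hc.edge_two hp).symm
  · have hp' : rhoInv f p ∈ Vtx f :=
      ⟨Int.emod_nonneg _ (twol_pos hI _).ne', Int.emod_lt_of_pos _ (twol_pos hI _)⟩
    let d : ZMod 3 → ℤ → X := fun i j ↦ c i (j + f.q i)
    have hd : ∀ i j, d i (j + f.twol i) = d i j := fun i j ↦
      periodic_congr (hc.periodic i) 1 (by ring)
    have h1 : d (iota2 f (rhoInv f p)).1 (iota2 f (rhoInv f p)).2 =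
        d (rhoInv f p).1 (rhoInv f p).2 := color_iota2 hd hc.edge_three hp'
    have h2 : d (rhoInv f p).1 (rhoInv f p).2 = c p.1 p.2 := by
      unfold rhoInv
      rw [periodic_emod (hd _)]
      exact periodic_congr (hc.periodic _) 0 (by ring)
    rw [← h2, ← h1]
    exact (periodic_emod (hc.periodic _) _).symm

/-- The set of `{2,3}`-residues of `f`. -/
abbrev Residues (f : Tuple) : Type :=
  Quot fun a b : Vtx f ↦ OrbRel f {2, 3} a b

theorem Residues.mk_eq_iff {f : Tuple} {a b : Vtx f} :
    (Quot.mk _ a : Residues f) = Quot.mk _ b ↔ OrbRel f {2, 3} a b :=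
  Equivalence.quot_mk_eq_iff (r := fun a b : Vtx f ↦ OrbRel f {2, 3} a b)
    ⟨fun _ ↦ .refl _, .symm _ _, .trans _ _ _⟩ a b

theorem threeOrbits_iff (f : Tuple) : ThreeOrbits f {2, 3} ↔ Nat.card (Residues f) = 3 := by
  constructor
  · rintro ⟨a, b, c, ha, hb, hc, hab, hac, hbc, h⟩
    rw [← Nat.card_fin 3]
    refine (Nat.card_congr (Equiv.ofBijective
      (![Quot.mk _ ⟨a, ha⟩, Quot.mk _ ⟨b, hb⟩, Quot.mk _ ⟨c, hc⟩] : Fin 3 → Residues f)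
      ⟨?_, ?_⟩)).symm
    · intro i j hij
      fin_cases i <;> fin_cases j <;>
        first
        | rfl
        | exact absurd (Residues.mk_eq_iff.1 hij) ‹_›
        | exact absurd (Residues.mk_eq_iff.1 hij.symm) ‹_›
    · rintro ⟨v, hv⟩
      rcases h v hv with h | h | h
      · exact ⟨0, Residues.mk_eq_iff.2 h⟩
      · exact ⟨1, Residues.mk_eq_iff.2 h⟩
      · exact ⟨2, Residues.mk_eq_iff.2 h⟩
  · intro h
    have : Finite (Residues f) := Nat.finite_of_card_ne_zero (by omega)
    let e : Fin 3 ≃ Residues f := (Finite.equivFinOfCardEq h).symm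
    obtain ⟨a, ha⟩ := Quot.exists_rep (e 0)
    obtain ⟨b, hb⟩ := Quot.exists_rep (e 1)
    obtain ⟨c, hc⟩ := Quot.exists_rep (e 2)
    refine ⟨a, b, c, a.2, b.2, c.2, ?_, ?_, ?_, fun v hv ↦ ?_⟩
    · rw [← Residues.mk_eq_iff, ha, hb, e.injective.eq_iff]; decide
    · rw [← Residues.mk_eq_iff, ha, hc, e.injective.eq_iff]; decide
    · rw [← Residues.mk_eq_iff, hb, hc, e.injective.eq_iff]; decide
    · obtain ⟨i, hi⟩ := e.surjective (Quot.mk _ ⟨v, hv⟩)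
      fin_cases i
      · exact .inl (Residues.mk_eq_iff (b := ⟨v, hv⟩).1 (ha.trans hi))
      · exact .inr (.inl (Residues.mk_eq_iff (b := ⟨v, hv⟩).1 (hb.trans hi)))
      · exact .inr (.inr (Residues.mk_eq_iff (b := ⟨v, hv⟩).1 (hc.trans hi)))

/-- The vertex of `f` on circle `i` at position `j`. -/
def vertex {f : Tuple} (h : CondI f) (i : ZMod 3) (j : ℤ) : Vtx f :=
  ⟨(i, j % f.twol i), Int.emod_nonneg _ (twol_pos h i).ne', Int.emod_lt_of_pos _ (twol_pos h i)⟩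

theorem vertex_eq {f : Tuple} (h : CondI f) (p : Vtx f) : vertex h p.1.1 p.1.2 = p :=
  Subtype.ext (Prod.ext rfl (Int.emod_eq_of_lt p.2.1 p.2.2))

/-- The colouring of the vertices by their residues. -/
def residueColoring {f : Tuple} (h : CondI f) (i : ZMod 3) (j : ℤ) : Residues f :=
  Quot.mk _ (vertex h i j)

theorem h_lt_twol {f : Tuple} (h : CondI f) (i : ZMod 3) : f.h i < f.twol i := by
  have := h (i - 1)
  simp only [Tuple.twol]
  omega

theorem residueColoring_periodic {f : Tuple} (h : CondI f) (i : ZMod 3) (j : ℤ) :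
    residueColoring h i (j + f.twol i) = residueColoring h i j := by
  simp only [residueColoring, vertex, Int.add_emod_right]

theorem colors_residueColoring {f : Tuple} (h : CondI f) : Colors f (residueColoring h) := by
  have key : ∀ i j, 0 ≤ j → j < f.h i →
      iota2 f (i, j) = (i + 1, (-j - 1) % f.twol (i + 1)) := fun i j _ hj ↦ if_pos hj
  refine .of_edges (residueColoring_periodic h) (fun i j hj hj' ↦ ?_) (fun i j hj hj' ↦ ?_)
  · refine Quot.sound (.rel _ _ ⟨Subtype.prop _, Subtype.prop _, 2, by simp, ?_⟩)
    have hv : (vertex h i j : ZMod 3 × ℤ) = (i, j) :=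
      Prod.ext rfl (Int.emod_eq_of_lt hj (hj'.trans (h_lt_twol h i)))
    rw [hv]
    exact (key i j hj hj').symm
  · refine Quot.sound (.rel _ _ ⟨Subtype.prop _, Subtype.prop _, 3, by simp, ?_⟩)
    have hv : rhoInv f (vertex h i (j + f.q i)) = (i, j) := by
      refine Prod.ext rfl ?_
      simp only [rhoInv, vertex, Int.emod_sub_emod, add_sub_cancel_right]
      exact Int.emod_eq_of_lt hj (hj'.trans (h_lt_twol h i))
    change _ = rho f (iota2 f (rhoInv f _))
    rw [hv, key i j hj hj']
    simp [rho, vertex]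

/-- Every colouring of `f'` induces one of `f` using at least the same colours. -/
def Dominates (f f' : Tuple) : Prop :=
  ∀ (X : Type) (b : ZMod 3 → ℤ → X), Colors f' b →
    ∃ a : ZMod 3 → ℤ → X, Colors f a ∧ ∀ i j, ∃ i' j', a i' j' = b i j

theorem Dominates.trans {f g k : Tuple} (h : Dominates f g) (h' : Dominates g k) :
    Dominates f k := by
  intro X c hc
  obtain ⟨b, hb, hbc⟩ := h' X c hc
  obtain ⟨a, ha, hab⟩ := h X b hb
  refine ⟨a, ha, fun i j ↦ ?_⟩
  obtain ⟨i', j', h1⟩ := hbc i j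
  obtain ⟨i'', j'', h2⟩ := hab i' j'
  exact ⟨i'', j'', h2.trans h1⟩

theorem Dominates.exists_surjective {f f' : Tuple} (hf : CondI f) (hf' : CondI f')
    (h : Dominates f f') : ∃ F : Residues f → Residues f', Function.Surjective F := by
  obtain ⟨a, ha, hs⟩ := h _ _ (colors_residueColoring hf')
  have key : ∀ p p', OrbRel f {2, 3} p p' → a p.1 p.2 = a p'.1 p'.2 := by
    intro p p' hp
    induction hp with
    | rel _ _ h => exact ha.color_iota hf h
    | refl => rfl
    | symm _ _ _ ih => exact ih.symm
    | trans _ _ _ _ _ ih ih' => exact ih.trans ih'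
  refine ⟨Quot.lift (fun p ↦ a p.1.1 p.1.2) fun p p' hp ↦ key _ _ hp, ?_⟩
  rintro ⟨p⟩
  obtain ⟨i, j, hij⟩ := hs p.1.1 p.1.2
  refine ⟨Quot.mk _ (vertex hf i j), ?_⟩
  change a i (j % f.twol i) = _
  rw [periodic_emod (ha.periodic i), hij]
  exact congrArg (Quot.mk _) (vertex_eq hf' p)

theorem ThreeOrbits.of_dominates {f f' : Tuple} (hf : CondI f) (hf' : CondI f')
    (h : Dominates f f') (h' : Dominates f' f) (h3 : ThreeOrbits f {2, 3}) :
    ThreeOrbits f' {2, 3} := by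
  rw [threeOrbits_iff] at h3 ⊢
  have : Finite (Residues f) := Nat.finite_of_card_ne_zero (by omega)
  obtain ⟨F, hF⟩ := h.exists_surjective hf hf'
  obtain ⟨G, hG⟩ := h'.exists_surjective hf' hf
  have : Finite (Residues f') := Finite.of_surjective F hF
  have h1 := Nat.card_le_card_of_surjective F hF
  have h2 := Nat.card_le_card_of_surjective G hG
  omega

/-! ### Numerical form of conditions (I)–(V) -/

/-- Conditions (I)–(V), spelled out. -/
structure Regular (f : Tuple) : Prop where
  h0_pos : 0 < f.h0
  h1_pos : 0 < f.h1
  h2_pos : 0 < f.h2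
  h1_parity : f.h1 % 2 = f.h0 % 2
  h2_parity : f.h2 % 2 = f.h0 % 2
  q0_mem : 0 ≤ f.q0 ∧ f.q0 < f.h2 + f.h0
  q1_mem : 0 ≤ f.q1 ∧ f.q1 < f.h0 + f.h1
  q2_mem : 0 ≤ f.q2 ∧ f.q2 < f.h1 + f.h2
  q0_parity : (f.h0 + f.q0) % 2 = 1
  q1_parity : (f.h0 + f.q1) % 2 = 1
  q2_parity : (f.h0 + f.q2) % 2 = 1

theorem regular_iff (f : Tuple) : Regular f ↔ CondsI_IV f ∧ CondV f := by
  constructor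
  · intro h
    have h0 := h.h0_pos
    have h1 := h.h1_parity
    have h2 := h.h2_parity
    have p0 := h.q0_parity
    have p1 := h.q1_parity
    have p2 := h.q2_parity
    have hpar : ∀ i, f.h i % 2 = f.h0 % 2 := forall_zmod_three.2 ⟨rfl, h1, h2⟩
    have qpar : ∀ i, f.q i % 2 = f.q0 % 2 := forall_zmod_three.2
      ⟨rfl, by change f.q1 % 2 = _; omega, by change f.q2 % 2 = _; omega⟩
    refine ⟨⟨forall_zmod_three.2 ⟨h0, h.h1_pos, h.h2_pos⟩, fun i j ↦ (hpar i).trans (hpar j).symm,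
      forall_zmod_three.2 ⟨h.q0_mem, h.q1_mem, h.q2_mem⟩,
      fun i j ↦ (qpar i).trans (qpar j).symm⟩, fun i ↦ ?_⟩
    have := hpar i
    have := qpar i
    omega
  · rintro ⟨⟨hI, hII, hIII, hIV⟩, hV⟩
    have h1 : f.h1 % 2 = f.h0 % 2 := hII 1 0
    have h2 : f.h2 % 2 = f.h0 % 2 := hII 2 0
    have p0 : (f.h0 + f.q0) % 2 = 1 := hV 0
    have p1 : (f.h1 + f.q1) % 2 = 1 := hV 1
    have p2 : (f.h2 + f.q2) % 2 = 1 := hV 2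
    exact ⟨hI 0, hI 1, hI 2, h1, h2, hIII 0, hIII 1, hIII 2, p0, by omega, by omega⟩

theorem admissible_iff (f : Tuple) : Admissible f ↔ Regular f ∧ ThreeOrbits f {2, 3} := by
  rw [regular_iff, Admissible, and_assoc]

namespace Regular

variable {f : Tuple}

theorem condI (h : Regular f) : CondI f :=
  forall_zmod_three.2 ⟨h.h0_pos, h.h1_pos, h.h2_pos⟩

theorem q0_ne_h0 (h : Regular f) : f.q0 ≠ f.h0 := by
  have := h.q0_parity
  omega

theorem q0_ne_h2 (h : Regular f) : f.q0 ≠ f.h2 := by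
  have := h.q0_parity
  have := h.h2_parity
  omega

theorem psi1 (h : Regular f) : Regular (psi1 f) := by
  obtain ⟨_, _, _, _, _, _, _, _, _, _, _⟩ := h
  constructor <;> simp only [GMN.psi1] <;> omega

theorem psi2 (h : Regular f) : Regular (psi2 f) := by
  obtain ⟨_, _, _, _, _, _, _, _, _, _, _⟩ := h
  constructor <;> simp only [GMN.psi2] <;> omega

theorem of_emod {a0 a1 a2 x0 x1 x2 : ℤ} (h0 : 0 < a0) (h1 : 0 < a1) (h2 : 0 < a2)
    (p1 : a1 % 2 = a0 % 2) (p2 : a2 % 2 = a0 % 2) (r0 : (a0 + x0) % 2 = 1)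
    (r1 : (a0 + x1) % 2 = 1) (r2 : (a0 + x2) % 2 = 1) :
    Regular ⟨a0, a1, a2, x0 % (a2 + a0), x1 % (a0 + a1), x2 % (a1 + a2)⟩ := by
  have key : ∀ x n : ℤ, n % 2 = 0 → x % n % 2 = x % 2 := fun x n hn ↦
    Int.emod_emod_of_dvd x (Int.dvd_of_emod_eq_zero hn)
  have k0 := key x0 (a2 + a0) (by omega)
  have k1 := key x1 (a0 + a1) (by omega)
  have k2 := key x2 (a1 + a2) (by omega)
  have mem : ∀ x n : ℤ, 0 < n → 0 ≤ x % n ∧ x % n < n := fun x n hn ↦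
    ⟨Int.emod_nonneg x hn.ne', Int.emod_lt_of_pos x hn⟩
  exact ⟨h0, h1, h2, p1, p2, mem _ _ (by omega), mem _ _ (by omega), mem _ _ (by omega),
    by dsimp only; omega, by dsimp only; omega, by dsimp only; omega⟩

end Regular

/-! ### The maps `ψ₁` and `ψ₂` -/

theorem dominates_psi1 (f : Tuple) : Dominates f (psi1 f) := fun _ b hb ↦
  ⟨fun i j ↦ b (i - 1) j,
    ⟨hb.per2, hb.per0, hb.per1, hb.e2, hb.e0, hb.e1, hb.t2, hb.t0, hb.t1⟩,
    fun i j ↦ ⟨i + 1, j, by simp⟩⟩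

theorem IsColoring.reverse {X : Type} {h0 h1 h2 q0 q1 q2 : ℤ} {b0 b1 b2 : ℤ → X}
    (hb : IsColoring h2 h1 h0 q0 q2 q1 b0 b1 b2) :
    IsColoring h0 h1 h2 q0 q1 q2 (fun j ↦ b0 (-j - 1 + q0)) (fun j ↦ b2 (-j - 1 + q1))
      (fun j ↦ b1 (-j - 1 + q2)) where
  per0 _ := periodic_congr hb.per0 (-1) (by ring)
  per1 _ := periodic_congr hb.per2 (-1) (by ring)
  per2 _ := periodic_congr hb.per1 (-1) (by ring)
  e0 j h h' := (hb.T2 j 0 0 ⟨h, h'⟩ (by ring) (by ring)).symm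
  e1 j h h' := (hb.T1 j 0 0 ⟨h, h'⟩ (by ring) (by ring)).symm
  e2 j h h' := (hb.T0 j 0 0 ⟨h, h'⟩ (by ring) (by ring)).symm
  t0 j h h' := (hb.E2 j 0 0 ⟨h, h'⟩ (by ring) (by ring)).symm
  t1 j h h' := (hb.E1 j 0 0 ⟨h, h'⟩ (by ring) (by ring)).symm
  t2 j h h' := (hb.E0 j 0 0 ⟨h, h'⟩ (by ring) (by ring)).symm

theorem dominates_psi2 (f : Tuple) : Dominates f (psi2 f) := fun X b hb ↦
  ⟨(![fun j ↦ b 0 (-j - 1 + f.q0), fun j ↦ b 2 (-j - 1 + f.q1), fun j ↦ b 1 (-j - 1 + f.q2)] :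
      Fin 3 → ℤ → X),
    IsColoring.reverse hb, forall_zmod_three.2
    ⟨fun j ↦ ⟨0, -j - 1 + f.q0, congrArg (b 0) (by ring)⟩,
      fun j ↦ ⟨2, -j - 1 + f.q2, congrArg (b 1) (by ring)⟩,
      fun j ↦ ⟨1, -j - 1 + f.q1, congrArg (b 2) (by ring)⟩⟩⟩

theorem Admissible.psi1 {f : Tuple} (hf : Admissible f) : Admissible (psi1 f) := by
  rw [admissible_iff] at hf ⊢
  exact ⟨hf.1.psi1, .of_dominates hf.1.condI hf.1.psi1.condI (dominates_psi1 f)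
    ((dominates_psi1 _).trans (dominates_psi1 _)) hf.2⟩

theorem Admissible.iterate_psi1 {f : Tuple} (hf : Admissible f) (e : ℕ) :
    Admissible (GMN.psi1^[e] f) := by
  induction e with
  | zero => exact hf
  | succ e ih =>
    rw [Function.iterate_succ_apply']
    exact ih.psi1

/-! ### The map `σ` -/

theorem sigma_eq_of_zero {f : Tuple} (h : f.q0 = 0) : sigma f = f := if_pos h

theorem sigma_eq_of_small {f : Tuple} (h : f.q0 ≠ 0) (h0 : f.q0 < f.h0) (h2 : f.q0 < f.h2) :
    sigma f = ⟨f.h0 + f.h1 - f.q0, f.q0, f.h2 + f.h1 - f.q0,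
      (f.h0 + f.h1 + f.h2 - 2 * f.q0) % ((f.h2 + f.h1 - f.q0) + (f.h0 + f.h1 - f.q0)),
      (f.q0 + f.q1 + f.h1) % ((f.h0 + f.h1 - f.q0) + f.q0),
      (f.q0 + f.q2 + f.h1) % (f.q0 + (f.h2 + f.h1 - f.q0))⟩ := by
  rw [sigma, if_neg h, if_pos ⟨h0, h2⟩]

theorem sigma_eq_of_large {f : Tuple} (h : f.q0 ≠ 0) (h0 : f.h0 < f.q0) (h2 : f.h2 < f.q0) :
    sigma f = ⟨f.q0 + f.h1 - f.h2, f.h0 + f.h2 - f.q0, f.q0 + f.h1 - f.h0,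
      f.h1 % ((f.q0 + f.h1 - f.h0) + (f.q0 + f.h1 - f.h2)),
      (f.q0 + f.q1 - f.h2) % ((f.q0 + f.h1 - f.h2) + (f.h0 + f.h2 - f.q0)),
      (f.q0 + f.q2 - f.h0) % ((f.h0 + f.h2 - f.q0) + (f.q0 + f.h1 - f.h0))⟩ := by
  rw [sigma, if_neg h, if_neg (by omega), if_pos ⟨h0, h2⟩]

theorem sigma_eq_of_between {f : Tuple} (h : f.q0 ≠ 0) (h0 : f.h0 < f.q0) (h2 : f.q0 < f.h2) :
    sigma f = ⟨f.h1, f.h0, f.h1 + f.h2 - f.h0,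
      (f.h1 + f.h2 - f.q0) % ((f.h1 + f.h2 - f.h0) + f.h1),
      f.q1 % (f.h1 + f.h0),
      (2 * f.q0 + f.q2 + f.h1 - f.h0) % (f.h0 + (f.h1 + f.h2 - f.h0))⟩ := by
  rw [sigma, if_neg h, if_neg (by omega), if_neg (by omega), if_pos h2]

theorem sigma_eq_of_between' {f : Tuple} (h : f.q0 ≠ 0) (h0 : f.q0 < f.h0) (h2 : f.h2 < f.q0) :
    sigma f = ⟨f.h1 + f.h0 - f.h2, f.h2, f.h1,
      (f.h1 + f.h0 - f.q0) % (f.h1 + (f.h1 + f.h0 - f.h2)),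
      (2 * f.q0 + f.q1 + f.h1 - f.h2) % ((f.h1 + f.h0 - f.h2) + f.h2),
      f.q2 % (f.h2 + f.h1)⟩ := by
  rw [sigma, if_neg h, if_neg (by omega), if_neg (by omega), if_neg (by omega)]

theorem Regular.cases {f : Tuple} (hf : Regular f) : f.q0 = 0 ∨
    (f.q0 ≠ 0 ∧ f.q0 < f.h0 ∧ f.q0 < f.h2) ∨ (f.q0 ≠ 0 ∧ f.h0 < f.q0 ∧ f.h2 < f.q0) ∨
    (f.q0 ≠ 0 ∧ f.h0 < f.q0 ∧ f.q0 < f.h2) ∨ (f.q0 ≠ 0 ∧ f.q0 < f.h0 ∧ f.h2 < f.q0) := by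
  have := hf.q0_ne_h0
  have := hf.q0_ne_h2
  omega

theorem Tuple.ext' {f g : Tuple} (h0 : f.h0 = g.h0) (h1 : f.h1 = g.h1) (h2 : f.h2 = g.h2)
    (q0 : f.q0 = g.q0) (q1 : f.q1 = g.q1) (q2 : f.q2 = g.q2) : f = g := by
  cases f
  cases g
  simp_all

theorem emod_congr {x y n m : ℤ} (k : ℤ) (hn : n = m) (h : x = y + k * n) : x % n = y % m := by
  rw [h, Int.add_mul_emod_self_right, hn]

theorem sigma_psi2 {f : Tuple} (hf : Regular f) : sigma (psi2 f) = psi2 (sigma f) := by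
  rcases hf.cases with h | ⟨h, h0, h2⟩ | ⟨h, h0, h2⟩ | ⟨h, h0, h2⟩ | ⟨h, h0, h2⟩
  · rw [sigma_eq_of_zero h, sigma_eq_of_zero (f := psi2 f) h]
  · rw [sigma_eq_of_small h h0 h2, sigma_eq_of_small (f := psi2 f) h h2 h0]
    apply Tuple.ext' <;> dsimp only [psi2] <;> congr 1 <;> ring
  · rw [sigma_eq_of_large h h0 h2, sigma_eq_of_large (f := psi2 f) h h2 h0]
    apply Tuple.ext' <;> dsimp only [psi2] <;> first | rfl | (congr 1; ring)
  · rw [sigma_eq_of_between h h0 h2, sigma_eq_of_between' (f := psi2 f) h h2 h0]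
    apply Tuple.ext' <;> dsimp only [psi2] <;> first | rfl | (congr 1; ring)
  · rw [sigma_eq_of_between' h h0 h2, sigma_eq_of_between (f := psi2 f) h h2 h0]
    apply Tuple.ext' <;> dsimp only [psi2] <;> first | rfl | (congr 1; ring)

theorem Regular.sigma {f : Tuple} (hf : Regular f) : Regular (sigma f) := by
  have hc := hf.cases
  obtain ⟨_, _, _, _, _, ⟨_, _⟩, _, _, _, _, _⟩ := id hf
  rcases hc with h | ⟨h, h0, h2⟩ | ⟨h, h0, h2⟩ | ⟨h, h0, h2⟩ | ⟨h, h0, h2⟩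
  · rwa [sigma_eq_of_zero h]
  · rw [sigma_eq_of_small h h0 h2]
    apply Regular.of_emod <;> omega
  · rw [sigma_eq_of_large h h0 h2]
    apply Regular.of_emod <;> omega
  · rw [sigma_eq_of_between h h0 h2]
    apply Regular.of_emod <;> omega
  · rw [sigma_eq_of_between' h h0 h2]
    apply Regular.of_emod <;> omega

theorem Regular.psi3 {f : Tuple} (hf : Regular f) : Regular (psi3 f) := by
  obtain ⟨_, _, _, _, _, _, _, _, _, _, _⟩ := hf
  apply Regular.of_emod <;> omega

theorem Regular.eq_of_congr {f g : Tuple} (hf : Regular f) (hg : Regular g) (h0 : f.h0 = g.h0)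
    (h1 : f.h1 = g.h1) (h2 : f.h2 = g.h2) (q0 : f.q0 = g.q0) (k1 k2 : ℤ)
    (q1 : f.q1 = g.q1 + k1 * (f.h0 + f.h1)) (q2 : f.q2 = g.q2 + k2 * (f.h1 + f.h2)) : f = g := by
  refine Tuple.ext' h0 h1 h2 q0 ?_ ?_
  · rw [← Int.emod_eq_of_lt hf.q1_mem.1 hf.q1_mem.2, ← Int.emod_eq_of_lt hg.q1_mem.1 hg.q1_mem.2]
    exact emod_congr k1 (by rw [h0, h1]) q1
  · rw [← Int.emod_eq_of_lt hf.q2_mem.1 hf.q2_mem.2, ← Int.emod_eq_of_lt hg.q2_mem.1 hg.q2_mem.2]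
    exact emod_congr k2 (by rw [h1, h2]) q2

theorem exists_emod_eq (x : ℤ) {n m : ℤ} (h : n = m) : ∃ k, x % n = x + k * m :=
  ⟨-(x / n), by rw [← h]; linarith [Int.emod_add_mul_ediv x n]⟩

theorem exists_psi3_eq {f : Tuple} (hf : Regular f) (h : f.q0 ≠ 0) : ∃ k1 k2, psi3 f =
    ⟨f.h0, f.h1, f.h2, f.h2 + f.h0 - f.q0,
      -f.q1 + k1 * (f.h0 + f.h1), -f.q2 + k2 * (f.h1 + f.h2)⟩ := by
  have := hf.q0_mem
  obtain ⟨k1, e1⟩ := exists_emod_eq (-f.q1) (n := f.h0 + f.h1) rfl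
  obtain ⟨k2, e2⟩ := exists_emod_eq (-f.q2) (n := f.h1 + f.h2) rfl
  refine ⟨k1, k2, Tuple.ext' rfl rfl rfl ?_ e1 e2⟩
  exact (emod_congr (-1) rfl (by ring)).trans (Int.emod_eq_of_lt (by dsimp only; omega)
    (by dsimp only; omega))

theorem exists_sigma_eq_of_small {f : Tuple} (hf : Regular f) (h : f.q0 ≠ 0) (h0 : f.q0 < f.h0)
    (h2 : f.q0 < f.h2) : ∃ k1 k2, sigma f =
      ⟨f.h0 + f.h1 - f.q0, f.q0, f.h2 + f.h1 - f.q0, f.h0 + f.h1 + f.h2 - 2 * f.q0,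
        f.q0 + f.q1 + f.h1 + k1 * (f.h0 + f.h1), f.q0 + f.q2 + f.h1 + k2 * (f.h1 + f.h2)⟩ := by
  have := hf.h1_pos
  obtain ⟨k1, e1⟩ := exists_emod_eq (f.q0 + f.q1 + f.h1)
    (show f.h0 + f.h1 - f.q0 + f.q0 = f.h0 + f.h1 by ring)
  obtain ⟨k2, e2⟩ := exists_emod_eq (f.q0 + f.q2 + f.h1)
    (show f.q0 + (f.h2 + f.h1 - f.q0) = f.h1 + f.h2 by ring)
  refine ⟨k1, k2, ?_⟩
  rw [sigma_eq_of_small h h0 h2, e1, e2,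
    Int.emod_eq_of_lt (a := f.h0 + f.h1 + f.h2 - 2 * f.q0) (by omega) (by omega)]

theorem exists_sigma_eq_of_large {f : Tuple} (hf : Regular f) (h : f.q0 ≠ 0) (h0 : f.h0 < f.q0)
    (h2 : f.h2 < f.q0) : ∃ k1 k2, sigma f =
      ⟨f.q0 + f.h1 - f.h2, f.h0 + f.h2 - f.q0, f.q0 + f.h1 - f.h0, f.h1,
        f.q0 + f.q1 - f.h2 + k1 * (f.h0 + f.h1), f.q0 + f.q2 - f.h0 + k2 * (f.h1 + f.h2)⟩ := by
  have := hf.h1_pos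
  obtain ⟨k1, e1⟩ := exists_emod_eq (f.q0 + f.q1 - f.h2)
    (show f.q0 + f.h1 - f.h2 + (f.h0 + f.h2 - f.q0) = f.h0 + f.h1 by ring)
  obtain ⟨k2, e2⟩ := exists_emod_eq (f.q0 + f.q2 - f.h0)
    (show f.h0 + f.h2 - f.q0 + (f.q0 + f.h1 - f.h0) = f.h1 + f.h2 by ring)
  refine ⟨k1, k2, ?_⟩
  rw [sigma_eq_of_large h h0 h2, e1, e2, Int.emod_eq_of_lt (a := f.h1) (by omega) (by omega)]

theorem exists_sigma_eq_of_between {f : Tuple} (hf : Regular f) (h : f.q0 ≠ 0)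
    (h0 : f.h0 < f.q0) (h2 : f.q0 < f.h2) : ∃ k1 k2, sigma f =
      ⟨f.h1, f.h0, f.h1 + f.h2 - f.h0, f.h1 + f.h2 - f.q0, f.q1 + k1 * (f.h0 + f.h1),
        2 * f.q0 + f.q2 + f.h1 - f.h0 + k2 * (f.h1 + f.h2)⟩ := by
  have := hf.h1_pos
  obtain ⟨k1, e1⟩ := exists_emod_eq f.q1 (add_comm f.h1 f.h0)
  obtain ⟨k2, e2⟩ := exists_emod_eq (2 * f.q0 + f.q2 + f.h1 - f.h0)
    (show f.h0 + (f.h1 + f.h2 - f.h0) = f.h1 + f.h2 by ring)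
  refine ⟨k1, k2, ?_⟩
  rw [sigma_eq_of_between h h0 h2, e1, e2,
    Int.emod_eq_of_lt (a := f.h1 + f.h2 - f.q0) (by omega) (by omega)]

theorem sigma_sigma_of_between {f : Tuple} (hf : Regular f) (h : f.q0 ≠ 0)
    (h0 : f.h0 < f.q0) (h2 : f.q0 < f.h2) : sigma (sigma f) = f := by
  have := hf.h1_pos
  obtain ⟨k1, k2, e⟩ := exists_sigma_eq_of_between hf h h0 h2
  obtain ⟨l1, l2, e'⟩ := exists_sigma_eq_of_between hf.sigma (by rw [e]; dsimp only; omega)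
    (by rw [e]; dsimp only; omega) (by rw [e]; dsimp only; omega)
  apply hf.sigma.sigma.eq_of_congr hf (k1 := k1 + l1) (k2 := k2 + l2 + 2) <;>
    rw [e', e] <;> ring

theorem sigma_sigma {f : Tuple} (hf : Regular f) : sigma (sigma f) = f := by
  have := hf.h1_pos
  have := hf.q0_mem
  rcases hf.cases with h | ⟨h, h0, h2⟩ | ⟨h, h0, h2⟩ | ⟨h, h0, h2⟩ | ⟨h, h0, h2⟩
  · rw [sigma_eq_of_zero h, sigma_eq_of_zero h]
  · obtain ⟨k1, k2, e⟩ := exists_sigma_eq_of_small hf h h0 h2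
    obtain ⟨l1, l2, e'⟩ := exists_sigma_eq_of_large hf.sigma (by rw [e]; dsimp only; omega)
      (by rw [e]; dsimp only; omega) (by rw [e]; dsimp only; omega)
    apply hf.sigma.sigma.eq_of_congr hf (k1 := k1 + l1 + 1) (k2 := k2 + l2 + 1) <;>
      rw [e', e] <;> ring
  · obtain ⟨k1, k2, e⟩ := exists_sigma_eq_of_large hf h h0 h2
    obtain ⟨l1, l2, e'⟩ := exists_sigma_eq_of_small hf.sigma (by rw [e]; dsimp only; omega)
      (by rw [e]; dsimp only; omega) (by rw [e]; dsimp only; omega)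
    apply hf.sigma.sigma.eq_of_congr hf (k1 := k1 + l1 + 1) (k2 := k2 + l2 + 1) <;>
      rw [e', e] <;> ring
  · exact sigma_sigma_of_between hf h h0 h2
  · have := sigma_sigma_of_between hf.psi2 h h2 h0
    rw [sigma_psi2 hf, sigma_psi2 hf.sigma] at this
    exact congrArg psi2 this

theorem psi3_psi2 (f : Tuple) : psi3 (psi2 f) = psi2 (psi3 f) := by
  apply Tuple.ext' <;> dsimp only [psi2, psi3] <;> rw [add_comm]

theorem sigma_psi3_of_between {f : Tuple} (hf : Regular f) (h : f.q0 ≠ 0)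
    (h0 : f.h0 < f.q0) (h2 : f.q0 < f.h2) : sigma (psi3 f) = psi3 (sigma f) := by
  have := hf.h0_pos
  have := hf.h1_pos
  obtain ⟨k1, k2, e⟩ := exists_sigma_eq_of_between hf h h0 h2
  obtain ⟨l1, l2, e'⟩ := exists_psi3_eq hf.sigma (by rw [e]; dsimp only; omega)
  obtain ⟨m1, m2, d⟩ := exists_psi3_eq hf h
  obtain ⟨n1, n2, d'⟩ := exists_sigma_eq_of_between hf.psi3 (by rw [d]; dsimp only; omega)
    (by rw [d]; dsimp only; omega) (by rw [d]; dsimp only; omega)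
  apply hf.psi3.sigma.eq_of_congr hf.sigma.psi3 (k1 := m1 + n1 + k1 - l1)
    (k2 := m2 + n2 + k2 - l2 + 2) <;> rw [d', d, e', e] <;> ring

theorem sigma_psi3 {f : Tuple} (hf : Regular f) : sigma (psi3 f) = psi3 (sigma f) := by
  have := hf.h1_pos
  have := hf.q0_mem
  rcases hf.cases with h | ⟨h, h0, h2⟩ | ⟨h, h0, h2⟩ | ⟨h, h0, h2⟩ | ⟨h, h0, h2⟩
  · rw [sigma_eq_of_zero h, sigma_eq_of_zero (by simp [psi3, h])]
  · obtain ⟨k1, k2, e⟩ := exists_sigma_eq_of_small hf h h0 h2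
    obtain ⟨l1, l2, e'⟩ := exists_psi3_eq hf.sigma (by rw [e]; dsimp only; omega)
    obtain ⟨m1, m2, d⟩ := exists_psi3_eq hf h
    obtain ⟨n1, n2, d'⟩ := exists_sigma_eq_of_large hf.psi3 (by rw [d]; dsimp only; omega)
      (by rw [d]; dsimp only; omega) (by rw [d]; dsimp only; omega)
    apply hf.psi3.sigma.eq_of_congr hf.sigma.psi3 (k1 := m1 + n1 + k1 - l1 + 1)
      (k2 := m2 + n2 + k2 - l2 + 1) <;> rw [d', d, e', e] <;> ring
  · obtain ⟨k1, k2, e⟩ := exists_sigma_eq_of_large hf h h0 h2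
    obtain ⟨l1, l2, e'⟩ := exists_psi3_eq hf.sigma (by rw [e]; dsimp only; omega)
    obtain ⟨m1, m2, d⟩ := exists_psi3_eq hf h
    obtain ⟨n1, n2, d'⟩ := exists_sigma_eq_of_small hf.psi3 (by rw [d]; dsimp only; omega)
      (by rw [d]; dsimp only; omega) (by rw [d]; dsimp only; omega)
    apply hf.psi3.sigma.eq_of_congr hf.sigma.psi3 (k1 := m1 + n1 + k1 - l1 + 1)
      (k2 := m2 + n2 + k2 - l2 + 1) <;> rw [d', d, e', e] <;> ring
  · exact sigma_psi3_of_between hf h h0 h2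
  · have := sigma_psi3_of_between hf.psi2 h h2 h0
    rw [psi3_psi2, sigma_psi2 hf.psi3, sigma_psi2 hf, psi3_psi2] at this
    exact congrArg psi2 this

theorem dominates_of_two {f g : Tuple} (hg : Regular g) {s1 s2 : ℤ → ℤ}
    (hs1 : Function.Surjective s1) (hs2 : Function.Surjective s2)
    (H : ∀ {X : Type} {b0 b1 b2 : ℤ → X},
      IsColoring g.h0 g.h1 g.h2 g.q0 g.q1 g.q2 b0 b1 b2 →
        ∃ a0, IsColoring f.h0 f.h1 f.h2 f.q0 f.q1 f.q2 a0 (b1 ∘ s1) (b2 ∘ s2)) :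
    Dominates f g := by
  intro X b hb
  obtain ⟨a0, ha⟩ := H hb
  have r1 : ∀ j, ∃ j', b 1 (s1 j') = b 1 j := fun j ↦ (hs1 j).imp fun _ h ↦ congrArg _ h
  have r2 : ∀ j, ∃ j', b 2 (s2 j') = b 2 j := fun j ↦ (hs2 j).imp fun _ h ↦ congrArg _ h
  refine ⟨(![a0, b 1 ∘ s1, b 2 ∘ s2] : Fin 3 → ℤ → X), ha, forall_zmod_three.2
    ⟨fun j ↦ ?_, fun j ↦ ⟨1, r1 j⟩, fun j ↦ ⟨2, r2 j⟩⟩⟩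
  rcases hb.exists_eq_zero (add_pos hg.h2_pos hg.h0_pos) j with ⟨y, hy⟩ | ⟨y, hy⟩
  · obtain ⟨j', hj'⟩ := r1 y
    exact ⟨1, j', hj'.trans hy⟩
  · obtain ⟨j', hj'⟩ := r2 y
    exact ⟨2, j', hj'.trans hy⟩

theorem dominates_sigma_of_between {f : Tuple} (hf : Regular f) (h : f.q0 ≠ 0)
    (h0 : f.h0 < f.q0) (h2 : f.q0 < f.h2) : Dominates f (sigma f) := by
  refine dominates_of_two hf.sigma (Equiv.addRight f.h0).surjective
    (Equiv.subLeft (f.q0 + f.q2 - f.h0 - 1)).surjective fun hb ↦ ?_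
  rw [sigma_eq_of_between h h0 h2] at hb
  exact hb.of_emod.sigma_between hf.h1_pos hf.h0_pos h0 h2

theorem dominates_sigma {f : Tuple} (hf : Regular f) : Dominates f (sigma f) := by
  rcases hf.cases with h | ⟨h, h0, h2⟩ | ⟨h, h0, h2⟩ | ⟨h, h0, h2⟩ | ⟨h, h0, h2⟩
  · rw [sigma_eq_of_zero h]
    exact fun X b hb ↦ ⟨b, hb, fun i j ↦ ⟨i, j, rfl⟩⟩
  · refine dominates_of_two hf.sigma (Equiv.addRight f.q0).surjective
      (Equiv.subLeft (f.q2 - 1)).surjective fun hb ↦ ?_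
    rw [sigma_eq_of_small h h0 h2] at hb
    exact hb.of_emod.sigma_small hf.h1_pos (lt_of_le_of_ne hf.q0_mem.1 h.symm) h0 h2
  · refine dominates_of_two hf.sigma (Equiv.subRight f.h1).surjective
      (Equiv.subLeft (f.q0 + f.q2 - f.h0 - 1)).surjective fun hb ↦ ?_
    rw [sigma_eq_of_large h h0 h2] at hb
    exact hb.of_emod.sigma_large hf.h1_pos hf.h0_pos hf.h2_pos h0 h2 hf.q0_mem.2
  · exact dominates_sigma_of_between hf h h0 h2
  · have h1 := dominates_sigma_of_between hf.psi2 h h2 h0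
    rw [sigma_psi2 hf] at h1
    exact ((dominates_psi2 f).trans h1).trans (dominates_psi2 (psi2 (sigma f)))

theorem Admissible.sigma {f : Tuple} (hf : Admissible f) : Admissible (sigma f) := by
  rw [admissible_iff] at hf ⊢
  obtain ⟨hr, h3⟩ := hf
  have h := dominates_sigma hr.sigma
  rw [sigma_sigma hr] at h
  exact ⟨hr.sigma, .of_dominates hr.condI hr.sigma.condI (dominates_sigma hr) h h3⟩

/-! ### Equivalence of the images under `σ` -/

theorem psi1_iterate_psi2 (f : Tuple) (e : ℕ) : psi1^[e] (psi2 f) = psi2 (psi1^[2 * e] f) := by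
  induction e with
  | zero => rfl
  | succ e ih =>
    rw [Function.iterate_succ_apply', ih, show 2 * (e + 1) = 2 * e + 1 + 1 from rfl,
      Function.iterate_succ_apply', Function.iterate_succ_apply']
    rfl

theorem psi1_iterate_psi3 (f : Tuple) (e : ℕ) : psi1^[e] (psi3 f) = psi3 (psi1^[e] f) :=
  (show Function.Commute psi1 psi3 from fun _ ↦ rfl).iterate_left e f

theorem psi1_iterate_add_three (f : Tuple) (e : ℕ) : psi1^[e + 3] f = psi1^[e] f :=
  Function.iterate_add_apply _ _ _ _

theorem H'Equiv.sigma_psi2 {f : Tuple} (hf : Admissible f) (hf' : Admissible (psi2 f)) :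
    H'Equiv (sigma f) (sigma (psi2 f)) :=
  .rel _ _ ⟨hf.sigma, hf'.sigma, .inl (GMN.sigma_psi2 ((admissible_iff f).1 hf).1)⟩

theorem H'Equiv.sigma_psi3 {f : Tuple} (hf : Admissible f) (hf' : Admissible (psi3 f)) :
    H'Equiv (sigma f) (sigma (psi3 f)) :=
  .rel _ _ ⟨hf.sigma, hf'.sigma, .inr (GMN.sigma_psi3 ((admissible_iff f).1 hf).1)⟩

/-- Every `σ(ψ₁^e(a))` is `H′`-equivalent to some `σ(ψ₁^e'(b))`. -/
def SigmaCovered (a b : Tuple) : Prop :=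
  ∀ e, ∃ e', H'Equiv (sigma (psi1^[e] a)) (sigma (psi1^[e'] b))

theorem SigmaCovered.trans {a b c : Tuple} (h : SigmaCovered a b) (h' : SigmaCovered b c) :
    SigmaCovered a c := fun e ↦ by
  obtain ⟨e', h1⟩ := h e
  obtain ⟨e'', h2⟩ := h' e'
  exact ⟨e'', .trans _ _ _ h1 h2⟩

theorem HStep.sigmaCovered {a b : Tuple} (h : HStep a b) :
    SigmaCovered a b ∧ SigmaCovered b a := by
  obtain ⟨ha, hb, rfl | rfl | rfl⟩ := h
  · refine ⟨fun e ↦ ⟨e + 2, ?_⟩, fun e ↦ ⟨e + 1, .refl _⟩⟩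
    rw [← Function.iterate_succ_apply, psi1_iterate_add_three]
    exact .refl _
  · have key : ∀ e, H'Equiv (sigma (psi1^[2 * e] a)) (sigma (psi1^[e] (psi2 a))) := fun e ↦ by
      have h := hb.iterate_psi1 e
      rw [psi1_iterate_psi2] at h ⊢
      exact .sigma_psi2 (ha.iterate_psi1 _) h
    refine ⟨fun e ↦ ⟨2 * e, ?_⟩, fun e ↦ ⟨2 * e, .symm _ _ (key e)⟩⟩
    have h := key (2 * e)
    have hper : psi1^[2 * (2 * e)] a = psi1^[e] a := by
      rw [show 2 * (2 * e) = e + 3 * e by ring, Function.iterate_add_apply,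
        Function.iterate_mul]
      exact congrArg _ (Function.iterate_fixed rfl e)
    rwa [hper] at h
  · have key : ∀ e, H'Equiv (sigma (psi1^[e] a)) (sigma (psi1^[e] (psi3 a))) := fun e ↦ by
      have h := hb.iterate_psi1 e
      rw [psi1_iterate_psi3] at h ⊢
      exact .sigma_psi3 (ha.iterate_psi1 _) h
    exact ⟨fun e ↦ ⟨e, key e⟩, fun e ↦ ⟨e, .symm _ _ (key e)⟩⟩

theorem HEquiv.sigmaCovered {a b : Tuple} (h : HEquiv a b) :
    SigmaCovered a b ∧ SigmaCovered b a := by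
  induction h with
  | rel _ _ h => exact h.sigmaCovered
  | refl => exact ⟨fun e ↦ ⟨e, .refl _⟩, fun e ↦ ⟨e, .refl _⟩⟩
  | symm _ _ _ ih => exact ih.symm
  | trans _ _ _ _ _ ih ih' => exact ⟨ih.1.trans ih'.1, ih'.2.trans ih.2⟩

theorem exists_fin_iterate_psi1 (f : Tuple) (e : ℕ) :
    ∃ e' : Fin 3, psi1^[e'.val] f = psi1^[e] f := by
  refine ⟨⟨e % 3, Nat.mod_lt _ (by norm_num)⟩, ?_⟩
  conv_rhs => rw [← Nat.mod_add_div e 3, Function.iterate_add_apply, Function.iterate_mul]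
  exact congrArg _ (Function.iterate_fixed rfl (e / 3)).symm

/-- if `f` is `H`-equivalent to `f′`, then `σ(f)` is `H′`-equivalent
to one of `σ(f′)`, `σ(ψ₁(f′))`, `σ(ψ₁²(f′))`. -/
theorem stmt_12 (f f' : Tuple) (hf : Admissible f) (hf' : Admissible f')
    (h : HEquiv f' f) :
    ∃ e : Fin 3, H'Equiv (sigma (psi1^[e.val] f')) (sigma f) := by
  obtain ⟨e, he⟩ := h.sigmaCovered.2 0
  obtain ⟨e', he'⟩ := exists_fin_iterate_psi1 f' e
  exact ⟨e', he' ▸ .symm _ _ he⟩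

end GMN
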